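/- Let F : ℝ^m → ℝ be L-smooth and bounded below, set L' = L + 1, and let (z_k) be generated by z_{k+1} = z_k + t_k s_k with ‖g_k − ∇F(z_k)‖₂ ≤ δ_k, c₁‖g_k‖₂² ≤ −g_kᵀ s_k, ‖s_k‖₂ ≤ c₂‖g_k‖₂, and δ_k ≤ β‖g_k‖₂ for some β ∈ [0, c₁/(c₂√L')). Suppose t_k ∈ [t̄₁ + γ, t̄₂ − γ] for all k, where t̄₁ = (c₁ − √Δ)/(c₂² L'), t̄₂ = (c₁ + √Δ)/(c₂² L'), Δ = c₁² − L' c₂² β², and γ ∈ (0, (t̄₂ − t̄₁)/2]. Then g_k → 0 and ∇F(z_k) → 0 as k → ∞. -/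

import Mathlib

open scoped RealInnerProductSpace

/-!
The descent lemma bounds `F (z (k + 1))` by the quadratic model of `F` at `z k`. Young's inequality
`t β ‖g‖ ‖s‖ ≤ β² ‖g‖² / 2 + t² ‖s‖² / 2` absorbs the gradient error at the cost of replacing `L` by
`L' = L + 1`, so that one step decreases `F` by at least half of
`(2 c₁ t - β² - c₂² L' t²) ‖g‖² = c₂² L' (t - t₁) (t₂ - t) ‖g‖² ≥ c₂² L' γ² ‖g‖²`.
As `F` is bounded below along the iterates, `‖g k‖²` is summable, and the relative error
bound carries `g k → 0` over to the exact gradients.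
-/

section General

open Filter Topology Gradient

lemma summable_of_le_sub_succ {a φ : ℕ → ℝ} (ha : ∀ k, 0 ≤ a k)
    (hφ : BddBelow (Set.range φ)) (h : ∀ k, a k ≤ φ k - φ (k + 1)) : Summable a := by
  obtain ⟨B, hB⟩ := hφ
  refine summable_of_sum_range_le (c := φ 0 - B) ha fun n => ?_
  calc ∑ i ∈ Finset.range n, a i
      ≤ ∑ i ∈ Finset.range n, (φ i - φ (i + 1)) := Finset.sum_le_sum fun i _ => h i
    _ = φ 0 - φ n := Finset.sum_range_sub' φ n
    _ ≤ φ 0 - B := sub_le_sub_left (hB ⟨n, rfl⟩) _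

section QuadraticRoots

variable {a b c d γ t : ℝ}

lemma pos_of_mem_Icc_roots (ha : 0 < a) (hγ : 0 < γ)
    (ht : t ∈ Set.Icc ((c - √d) / a + γ) ((c + √d) / a - γ)) : 0 < d := by
  have hroots : (c - √d) / a < (c + √d) / a := by linarith [ht.1, ht.2]
  rw [div_lt_div_iff_of_pos_right ha] at hroots
  exact Real.sqrt_pos.1 (by linarith)

lemma sub_sqrt_div_nonneg (ha : 0 ≤ a) (hb : 0 ≤ b) (hc : 0 ≤ c) (hd : d = c ^ 2 - a * b) :
    0 ≤ (c - √d) / a := by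
  have hsqrt : √d ≤ c :=
    Real.sqrt_le_iff.2 ⟨hc, hd ▸ sub_le_self _ (mul_nonneg ha hb)⟩
  exact div_nonneg (sub_nonneg.2 hsqrt) ha

lemma mul_sq_le_of_mem_Icc_roots (ha : 0 < a) (hd : d = c ^ 2 - a * b) (hγ : 0 < γ)
    (ht : t ∈ Set.Icc ((c - √d) / a + γ) ((c + √d) / a - γ)) :
    a * γ ^ 2 ≤ 2 * c * t - b - a * t ^ 2 := by
  have hsq : √d ^ 2 = c ^ 2 - a * b := by
    rw [Real.sq_sqrt (pos_of_mem_Icc_roots ha hγ ht).le, hd]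
  have hleft : γ ≤ t - (c - √d) / a := by linarith [ht.1]
  have hright : γ ≤ (c + √d) / a - t := by linarith [ht.2]
  calc a * γ ^ 2
      = a * (γ * γ) := by rw [sq]
    _ ≤ a * ((t - (c - √d) / a) * ((c + √d) / a - t)) := by
        gcongr
        exact hγ.le.trans hleft
    _ = 2 * c * t - b - a * t ^ 2 := by
        field_simp
        linear_combination hsq

end QuadraticRoots

section SeminormedAddCommGroup

variable {E : Type*} [SeminormedAddCommGroup E]

lemma tendsto_zero_of_mul_sq_norm_le_sub_succ {g : ℕ → E} {φ : ℕ → ℝ} {C : ℝ} (hC : 0 < C)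
    (hφ : BddBelow (Set.range φ)) (h : ∀ k, C * ‖g k‖ ^ 2 ≤ φ k - φ (k + 1)) :
    Tendsto g atTop (𝓝 0) := by
  have hsum : Summable fun k => C * ‖g k‖ ^ 2 :=
    summable_of_le_sub_succ (fun k => by positivity) hφ h
  have hsq : Tendsto (fun k => ‖g k‖ ^ 2) atTop (𝓝 0) :=
    ((summable_mul_left_iff hC.ne').1 hsum).tendsto_atTop_zero
  exact tendsto_zero_iff_norm_tendsto_zero.2 (by simpa using hsq.sqrt)

lemma tendsto_zero_of_norm_sub_le_mul_norm {ι : Type*} {l : Filter ι} {g p : ι → E} {β : ℝ}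
    (h : ∀ k, ‖g k - p k‖ ≤ β * ‖g k‖) (hg : Tendsto g l (𝓝 0)) : Tendsto p l (𝓝 0) := by
  have hsub : Tendsto (fun k => g k - p k) l (𝓝 0) :=
    squeeze_zero_norm h (by simpa using hg.norm.const_mul β)
  simpa using hg.sub hsub

end SeminormedAddCommGroup

lemma nonneg_of_norm_sub_le_mul_norm_sub {E G : Type*} [NormedAddCommGroup E] [Nontrivial E]
    [SeminormedAddCommGroup G] {f : E → G} {L : ℝ}
    (hf : ∀ x y, ‖f x - f y‖ ≤ L * ‖x - y‖) : 0 ≤ L := by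
  obtain ⟨x, y, hxy⟩ := exists_pair_ne E
  exact nonneg_of_mul_nonneg_left ((norm_nonneg _).trans (hf x y)) (norm_sub_pos_iff.2 hxy)

lemma inner_le_inner_add_mul_norm {E : Type*} [SeminormedAddCommGroup E]
    [InnerProductSpace ℝ E] {p q s : E} {ε : ℝ} (h : ‖p - q‖ ≤ ε) :
    ⟪p, s⟫ ≤ ⟪q, s⟫ + ε * ‖s‖ := by
  calc ⟪p, s⟫
      = ⟪q, s⟫ + ⟪p - q, s⟫ := by rw [inner_sub_left]; ring
    _ ≤ ⟪q, s⟫ + ‖p - q‖ * ‖s‖ := by gcongr; exact real_inner_le_norm _ _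
    _ ≤ ⟪q, s⟫ + ε * ‖s‖ := by gcongr

section InnerProductSpace

variable {E : Type*} [NormedAddCommGroup E] [InnerProductSpace ℝ E] [CompleteSpace E] {F : E → ℝ}

lemma hasDerivAt_apply_add_smul {x v : E} {u : ℝ}
    (hF : DifferentiableAt ℝ F (x + u • v)) :
    HasDerivAt (fun u : ℝ => F (x + u • v)) ⟪∇ F (x + u • v), v⟫ u := by
  have hline : HasDerivAt (fun u : ℝ => x + u • v) v u := by
    simpa using ((hasDerivAt_id u).smul_const v).const_add x
  rw [inner_gradient_left]
  exact hF.hasFDerivAt.comp_hasDerivAt u hline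

lemma apply_add_le_of_norm_gradient_sub_le {L : ℝ} {x : E} (hF : Differentiable ℝ F)
    (hlip : ∀ y, ‖∇ F y - ∇ F x‖ ≤ L * ‖y - x‖) (v : E) :
    F (x + v) ≤ F x + ⟪∇ F x, v⟫ + L / 2 * ‖v‖ ^ 2 := by
  have hderiv (u : ℝ) := hasDerivAt_apply_add_smul (hF (x + u • v))
  have hmodel (u : ℝ) : HasDerivAt
      (fun u : ℝ => F x + u * ⟪∇ F x, v⟫ + L / 2 * ‖v‖ ^ 2 * u ^ 2)
      (⟪∇ F x, v⟫ + L * u * ‖v‖ ^ 2) u := by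
    have hlinear : HasDerivAt (fun u : ℝ => u * ⟪∇ F x, v⟫) ⟪∇ F x, v⟫ u := by
      simpa using (hasDerivAt_id u).mul_const ⟪∇ F x, v⟫
    have hquadratic := (hasDerivAt_pow 2 u).const_mul (L / 2 * ‖v‖ ^ 2)
    refine ((hlinear.const_add (F x)).add hquadratic).congr_deriv ?_
    push_cast
    ring
  have hle : ∀ u ∈ Set.Ico (0 : ℝ) 1, ⟪∇ F (x + u • v), v⟫ ≤ ⟪∇ F x, v⟫ + L * u * ‖v‖ ^ 2 := by
    intro u hu
    calc ⟪∇ F (x + u • v), v⟫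
        ≤ ⟪∇ F x, v⟫ + L * ‖x + u • v - x‖ * ‖v‖ := inner_le_inner_add_mul_norm (hlip _)
      _ = ⟪∇ F x, v⟫ + L * u * ‖v‖ ^ 2 := by
          rw [add_sub_cancel_left, norm_smul, Real.norm_of_nonneg hu.1]; ring
  simpa using image_le_of_deriv_right_le_deriv_boundary
    (fun u _ => (hderiv u).continuousAt.continuousWithinAt)
    (fun u _ => (hderiv u).hasDerivWithinAt) (by simp)
    (fun u _ => (hmodel u).continuousAt.continuousWithinAt)
    (fun u _ => (hmodel u).hasDerivWithinAt) hle (Set.right_mem_Icc.2 zero_le_one)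

lemma apply_add_smul_le_of_inexact_gradient {L c₁ c₂ β t : ℝ} {x s g : E}
    (hF : Differentiable ℝ F) (hlip : ∀ y, ‖∇ F y - ∇ F x‖ ≤ L * ‖y - x‖) (hL : 0 ≤ L + 1)
    (ht : 0 ≤ t) (herr : ‖g - ∇ F x‖ ≤ β * ‖g‖) (hdesc : c₁ * ‖g‖ ^ 2 ≤ -⟪g, s⟫)
    (hbnd : ‖s‖ ≤ c₂ * ‖g‖) :
    F (x + t • s) ≤ F x - (2 * c₁ * t - β ^ 2 - c₂ ^ 2 * (L + 1) * t ^ 2) / 2 * ‖g‖ ^ 2 := by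
  have hyoung := two_mul_le_add_sq (β * ‖g‖) (t * ‖s‖)
  calc F (x + t • s)
      ≤ F x + ⟪∇ F x, t • s⟫ + L / 2 * ‖t • s‖ ^ 2 := apply_add_le_of_norm_gradient_sub_le hF hlip _
    _ = F x + t * ⟪∇ F x, s⟫ + L / 2 * (t * ‖s‖) ^ 2 := by
        rw [inner_smul_right, norm_smul, Real.norm_of_nonneg ht]
    _ ≤ F x + t * (β * ‖g‖ * ‖s‖ - c₁ * ‖g‖ ^ 2) + L / 2 * (t * ‖s‖) ^ 2 := by
        gcongr
        linarith [inner_le_inner_add_mul_norm (s := s) ((norm_sub_rev _ _).trans_le herr)]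
    _ ≤ F x - c₁ * t * ‖g‖ ^ 2 + (β * ‖g‖) ^ 2 / 2 + (L + 1) / 2 * (t * ‖s‖) ^ 2 := by linarith
    _ ≤ F x - c₁ * t * ‖g‖ ^ 2 + (β * ‖g‖) ^ 2 / 2 + (L + 1) / 2 * (t * (c₂ * ‖g‖)) ^ 2 := by
        gcongr
    _ = F x - (2 * c₁ * t - β ^ 2 - c₂ ^ 2 * (L + 1) * t ^ 2) / 2 * ‖g‖ ^ 2 := by ring

theorem stmt_7_general {L L' c₁ c₂ β Δ t₁ t₂ γ : ℝ} {z s g : ℕ → E} {t : ℕ → ℝ}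
    (hF : Differentiable ℝ F) (hlip : ∀ x y, ‖∇ F x - ∇ F y‖ ≤ L * ‖x - y‖)
    (hbdd : BddBelow (Set.range fun k => F (z k))) (hL' : L' = L + 1)
    (hc₁ : 0 < c₁) (hc₂ : 0 < c₂) (hupd : ∀ k, z (k + 1) = z k + t k • s k)
    (herr : ∀ k, ‖g k - ∇ F (z k)‖ ≤ β * ‖g k‖) (hdesc : ∀ k, c₁ * ‖g k‖ ^ 2 ≤ -⟪g k, s k⟫)
    (hbnd : ∀ k, ‖s k‖ ≤ c₂ * ‖g k‖) (hΔ : Δ = c₁ ^ 2 - L' * c₂ ^ 2 * β ^ 2)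
    (ht₁ : t₁ = (c₁ - √Δ) / (c₂ ^ 2 * L')) (ht₂ : t₂ = (c₁ + √Δ) / (c₂ ^ 2 * L'))
    (hγ : 0 < γ) (htk : ∀ k, t k ∈ Set.Icc (t₁ + γ) (t₂ - γ)) :
    Tendsto g atTop (𝓝 0) ∧ Tendsto (fun k => ∇ F (z k)) atTop (𝓝 0) := by
  suffices hg : Tendsto g atTop (𝓝 0) from ⟨hg, tendsto_zero_of_norm_sub_le_mul_norm herr hg⟩
  rcases subsingleton_or_nontrivial E with _ | _
  · exact tendsto_const_nhds.congr fun k => Subsingleton.elim 0 (g k)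
  have hL'_pos : 0 < L' := by linarith [nonneg_of_norm_sub_le_mul_norm_sub hlip]
  have ha : 0 < c₂ ^ 2 * L' := by positivity
  have hΔ' : Δ = c₁ ^ 2 - c₂ ^ 2 * L' * β ^ 2 := by rw [hΔ, mul_comm L']
  have ht₁_nonneg : 0 ≤ t₁ := ht₁ ▸ sub_sqrt_div_nonneg ha.le (sq_nonneg β) hc₁.le hΔ'
  refine tendsto_zero_of_mul_sq_norm_le_sub_succ (C := c₂ ^ 2 * L' * γ ^ 2 / 2) (by positivity)
    hbdd fun k => ?_
  have ht_nonneg : 0 ≤ t k := by linarith [(htk k).1]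
  have hmargin : c₂ ^ 2 * L' * γ ^ 2 ≤ 2 * c₁ * t k - β ^ 2 - c₂ ^ 2 * L' * t k ^ 2 :=
    mul_sq_le_of_mem_Icc_roots ha hΔ' hγ (by simpa only [ht₁, ht₂] using htk k)
  have hstep := apply_add_smul_le_of_inexact_gradient hF (fun y => hlip y (z k)) (hL' ▸ hL'_pos.le)
    ht_nonneg (herr k) (hdesc k) (hbnd k)
  rw [← hupd, ← hL'] at hstep
  linarith [mul_le_mul_of_nonneg_right hmargin (sq_nonneg ‖g k‖)]

end InnerProductSpace

end General

/-- convergence of inexact and exact gradients to zero under bounded step sizes. -/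
theorem stmt_7 (m : ℕ) (F : EuclideanSpace ℝ (Fin m) → ℝ) (L L' : ℝ)
    (hdiff : Differentiable ℝ F)
    (hlip : ∀ x y : EuclideanSpace ℝ (Fin m), ‖gradient F x - gradient F y‖ ≤ L * ‖x - y‖)
    (hbdd : ∃ B : ℝ, ∀ x, B ≤ F x)
    (hL' : L' = L + 1)
    (z s g : ℕ → EuclideanSpace ℝ (Fin m)) (t δ : ℕ → ℝ)
    (c₁ c₂ : ℝ) (hc₁ : 0 < c₁) (hc₂ : 0 < c₂)
    (hδ : ∀ k, 0 ≤ δ k)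
    (hupd : ∀ k, z (k + 1) = z k + t k • s k)
    (herr : ∀ k, ‖g k - gradient F (z k)‖ ≤ δ k)
    (hdesc : ∀ k, c₁ * ‖g k‖ ^ 2 ≤ -⟪g k, s k⟫)
    (hbnd : ∀ k, ‖s k‖ ≤ c₂ * ‖g k‖)
    (β : ℝ) (hβ0 : 0 ≤ β) (hβ1 : β < c₁ / (c₂ * Real.sqrt L'))
    (hδβ : ∀ k, δ k ≤ β * ‖g k‖)
    (Δ t₁ t₂ : ℝ)
    (hΔ : Δ = c₁ ^ 2 - L' * c₂ ^ 2 * β ^ 2)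
    (ht₁ : t₁ = (c₁ - Real.sqrt Δ) / (c₂ ^ 2 * L'))
    (ht₂ : t₂ = (c₁ + Real.sqrt Δ) / (c₂ ^ 2 * L'))
    (γ : ℝ) (hγ0 : 0 < γ) (hγ1 : γ ≤ (t₂ - t₁) / 2)
    (htk : ∀ k, t k ∈ Set.Icc (t₁ + γ) (t₂ - γ)) :
    Filter.Tendsto g Filter.atTop (nhds 0) ∧
      Filter.Tendsto (fun k => gradient F (z k)) Filter.atTop (nhds 0) :=
  stmt_7_general hdiff hlip (hbdd.imp fun _ hB => Set.forall_mem_range.2 fun k => hB (z k)) hL'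
    hc₁ hc₂ hupd (fun k => (herr k).trans (hδβ k)) hdesc hbnd hΔ ht₁ ht₂ hγ0 htk
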